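/- Let A be a commutative ℚ-algebra and u : ι → ι → A satisfy u a b = -u b a, (u a b)² = 0, and the Arnold relation. With Δ a b c := u a b + u b c + u c a, the octahedral move holds: Δ 1 2 3 * Δ 3 4 5 * Δ 5 6 1 * Δ 6 4 2 = Δ 2 3 4 * Δ 4 5 6 * Δ 6 1 2 * Δ 1 5 3 for any six distinct indices. -/

import Mathlib

theorem sum_pow_four_of_sq_zero {A : Type*} [CommRing A] (a b c d : A)
    (ha : a ^ 2 = 0) (hb : b ^ 2 = 0) (hc : c ^ 2 = 0) (hd : d ^ 2 = 0) :
    (a + b + c + d) ^ 4 = 24 * (a * b * c * d) := by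
  grind

theorem triangle_sq_zero {A ι : Type*} [CommRing A] (u : ι → ι → A)
    (hsq : ∀ a b, (u a b) ^ 2 = 0)
    (harnold : ∀ a b c, u a b * u b c + u b c * u c a + u c a * u a b = 0)
    (a b c : ι) : (u a b + u b c + u c a) ^ 2 = 0 := by
  linear_combination hsq a b + hsq b c + hsq c a + 2 * harnold a b c

theorem octahedral_move
    {A ι : Type*} [CommRing A] [Algebra ℚ A] (u : ι → ι → A)
    (hanti : ∀ a b, u a b = - u b a)
    (hsq : ∀ a b, (u a b) ^ 2 = 0)
    (harnold : ∀ a b c, u a b * u b c + u b c * u c a + u c a * u a b = 0)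
    (i₁ i₂ i₃ i₄ i₅ i₆ : ι)
    (hdist : [i₁, i₂, i₃, i₄, i₅, i₆].Pairwise (· ≠ ·)) :
    (u i₁ i₂ + u i₂ i₃ + u i₃ i₁) * (u i₃ i₄ + u i₄ i₅ + u i₅ i₃)
        * (u i₅ i₆ + u i₆ i₁ + u i₁ i₅) * (u i₆ i₄ + u i₄ i₂ + u i₂ i₆)
      = (u i₂ i₃ + u i₃ i₄ + u i₄ i₂) * (u i₄ i₅ + u i₅ i₆ + u i₆ i₄)
        * (u i₆ i₁ + u i₁ i₂ + u i₂ i₆) * (u i₁ i₅ + u i₅ i₃ + u i₃ i₁) := by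
  have tri := triangle_sq_zero u hsq harnold
  have h1 := sum_pow_four_of_sq_zero _ _ _ _ (tri i₁ i₂ i₃) (tri i₃ i₄ i₅) (tri i₅ i₆ i₁)
    (tri i₆ i₄ i₂)
  have h2 := sum_pow_four_of_sq_zero _ _ _ _ (tri i₂ i₃ i₄) (tri i₄ i₅ i₆) (tri i₆ i₁ i₂)
    (tri i₁ i₅ i₃)
  have hu : IsUnit (24 : A) := by
    have h := (IsUnit.mk0 (24 : ℚ) (by norm_num)).map (algebraMap ℚ A)
    rwa [map_ofNat] at h
  apply hu.mul_left_cancel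
  rw [← h1, ← h2]
  ring
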